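/- arXiv:1810.03224 — 2 statements merged into one kernel-verified Lean document; each statement's English description precedes it below -/
import Mathlib

section
/- Let S ⊆ V with |S| ≥ 2, let V' be the vertex set obtained from V by identifying all vertices of S to a single vertex, and let P ∈ ℝ^{V'×V} be the 0–1 matrix with P_{z,y} = 1 if and only if z is the image of y under this identification. Let L_{G/S} := P L_G Pᵀ (the Laplacian of the graph G/S obtained by identifying S to a single vertex), with Moore–Penrose pseudoinverse (L_{G/S})⁺. Then for every edge e ∈ E, the decrease in effective resistance satisfies: b_eᵀ L_G⁺ b_e − (P b_e)ᵀ (L_{G/S})⁺ (P b_e) = the supremum over all nonzero x ∈ ℝ^V supported on S with xᵀ1 = 0 of (xᵀ L_G⁺ b_e)² / (xᵀ L_G⁺ x). -/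
open Matrix BigOperators

/-- `B` is the Moore–Penrose pseudoinverse of `A`. -/
def IsMoorePenrose {ι : Type*} [Fintype ι] [DecidableEq ι] (A B : Matrix ι ι ℝ) : Prop :=
  A * B * A = A ∧ B * A * B = B ∧ (A * B)ᵀ = A * B ∧ (B * A)ᵀ = B * A

/-!
Write `b = L y` and `x = L u`. In the semi-inner product `⟪u, v⟫ = u ⬝ᵥ L *ᵥ v` one has
`x ⬝ᵥ L⁺ *ᵥ b = ⟪u, y⟫` and `x ⬝ᵥ L⁺ *ᵥ x = ⟪u, u⟫`, and only `L * L⁺ * L = L` matters for this.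
The vector `q = Pᵀ *ᵥ (L_{G/S})⁺ *ᵥ P *ᵥ b` is the orthogonal projection of `y` onto the range of
`Pᵀ`, whose orthogonal complement is `{u | P *ᵥ L *ᵥ u = 0}`, and `⟪q, q⟫` is the effective
resistance in the quotient. By Pythagoras the decrease is `⟪y - q, y - q⟫`, which by
Cauchy–Schwarz is the largest value of `⟪u, y⟫² / ⟪u, u⟫` on that complement. Finally, `P *ᵥ x = 0`
says that `x` is supported on `S` and has entries summing to zero.
-/

lemma isGreatest_sq_apply_div {K M : Type*} [Field K] [LinearOrder K] [IsStrictOrderedRing K]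
    [AddCommGroup M] [Module K M] {β : LinearMap.BilinForm K M} (hβ : ∀ x, 0 ≤ β x x)
    (hsymm : β.IsSymm) {s : Set M} {d : M} (hd : d ∈ s) (hs : ∃ u ∈ s, β u u ≠ 0) :
    IsGreatest {t | ∃ u ∈ s, β u u ≠ 0 ∧ t = β u d ^ 2 / β u u} (β d d) := by
  have cauchySchwarz (u : M) : β u d ^ 2 / β u u ≤ β d d :=
    div_le_of_le_mul₀ (hβ u) (hβ d) (mul_comm (β u u) _ ▸ β.apply_sq_le_of_symm hβ ⟨hsymm.eq⟩ u d)
  refine ⟨?_, ?_⟩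
  · by_cases hdd : β d d = 0
    · obtain ⟨u, hu, huu⟩ := hs
      refine ⟨u, hu, huu, le_antisymm ?_ (cauchySchwarz u)⟩
      exact hdd ▸ div_nonneg (sq_nonneg _) (hβ u)
    · exact ⟨d, hd, hdd, by rw [sq, mul_div_cancel_right₀ _ hdd]⟩
  · rintro _ ⟨u, -, -, rfl⟩
    exact cauchySchwarz u

section GeneralizedInverse

variable {R m n : Type*} [CommRing R] [Fintype m] [Fintype n]

lemma mulVec_mulVec_of_mem_range {A : Matrix m n R} {C : Matrix n m R} (hC : A * C * A = A)
    {v : m → R} (hv : v ∈ Set.range A.mulVec) : A *ᵥ C *ᵥ v = v := by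
  obtain ⟨u, rfl⟩ := hv
  rw [mulVec_mulVec, mulVec_mulVec, hC]

lemma mem_range_mulVec_iff_forall_vecMul {A : Matrix m n R} {C : Matrix n m R}
    (hC : A * C * A = A) {v : m → R} :
    v ∈ Set.range A.mulVec ↔ ∀ k, k ᵥ* A = 0 → k ⬝ᵥ v = 0 := by
  constructor
  · rintro ⟨u, rfl⟩ k hk
    rw [dotProduct_mulVec, hk, zero_dotProduct]
  · refine fun hv => ⟨C *ᵥ v, dotProduct_eq _ _ fun w => ?_⟩
    have hk : (w ᵥ* (A * C) - w) ᵥ* A = 0 := by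
      rw [sub_vecMul, vecMul_vecMul, hC, sub_self]
    have hw : w ⬝ᵥ A *ᵥ C *ᵥ v = w ⬝ᵥ v := by
      rw [mulVec_mulVec, dotProduct_mulVec, ← sub_eq_zero, ← sub_dotProduct, hv _ hk]
    rw [dotProduct_comm, hw, dotProduct_comm]

variable {A C : Matrix n n R}

lemma mem_range_mulVec_iff_forall_mulVec (hA : A.IsSymm) (hC : A * C * A = A) {v : n → R} :
    v ∈ Set.range A.mulVec ↔ ∀ k, A *ᵥ k = 0 → k ⬝ᵥ v = 0 := by
  simp only [mem_range_mulVec_iff_forall_vecMul hC, ← mulVec_transpose, hA.eq]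

lemma mem_range_mulVec_iff_sum_eq_zero (hA : A.IsSymm) (hC : A * C * A = A)
    (hker : ∀ x, A *ᵥ x = 0 ↔ ∃ c, x = fun _ => c) {v : n → R} :
    v ∈ Set.range A.mulVec ↔ ∑ a, v a = 0 := by
  simp only [mem_range_mulVec_iff_forall_mulVec hA hC, hker, forall_exists_index,
    forall_eq_apply_imp_iff, dotProduct, ← Finset.mul_sum]
  exact ⟨fun h => by simpa using h 1, fun h c => by rw [h, mul_zero]⟩

lemma mulVec_dotProduct_mulVec_mulVec (hA : A.IsSymm) (hC : A * C * A = A) (u v : n → R) :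
    (A *ᵥ u) ⬝ᵥ C *ᵥ (A *ᵥ v) = u ⬝ᵥ A *ᵥ v := by
  rw [dotProduct_comm, ← dotProduct_transpose_mulVec, hA.eq,
    mulVec_mulVec_of_mem_range hC (Set.mem_range_self v)]

lemma dotProduct_mulVec_transpose_mulVec_eq_zero (hA : A.IsSymm) {P : Matrix m n R} {u : n → R}
    (hu : P *ᵥ A *ᵥ u = 0) (k : m → R) : u ⬝ᵥ A *ᵥ Pᵀ *ᵥ k = 0 := by
  rw [← dotProduct_transpose_mulVec, hA.eq, dotProduct_comm, dotProduct_transpose_mulVec, hu,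
    dotProduct_zero]

end GeneralizedInverse

section Compression

variable {m n : Type*} [Fintype m] [Fintype n] {A C : Matrix n n ℝ} {P : Matrix m n ℝ}
  {D : Matrix m m ℝ}

lemma mulVec_mem_range_compression (hA : A.PosSemidef)
    (hD : P * A * Pᵀ * D * (P * A * Pᵀ) = P * A * Pᵀ) (y : n → ℝ) :
    P *ᵥ A *ᵥ y ∈ Set.range (P * A * Pᵀ).mulVec := by
  have hAs : A.IsSymm := isHermitian_iff_isSymm.mp hA.isHermitian
  have hcompr : (P * A * Pᵀ).IsSymm := by
    simp only [IsSymm, transpose_mul, transpose_transpose, hAs.eq, Matrix.mul_assoc]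
  refine (mem_range_mulVec_iff_forall_mulVec hcompr hD).mpr fun k hk => ?_
  have hAPk : A *ᵥ Pᵀ *ᵥ k = 0 := by
    refine (hA.dotProduct_mulVec_zero_iff _).mp ?_
    rw [star_trivial, dotProduct_comm, dotProduct_transpose_mulVec, mulVec_mulVec, mulVec_mulVec,
      hk, dotProduct_zero]
  rw [dotProduct_mulVec, ← mulVec_transpose, ← dotProduct_transpose_mulVec, hAs.eq, hAPk,
    dotProduct_zero]

lemma exists_orthogonal_sub_and_energy_sub_eq (hA : A.PosSemidef)
    (hD : P * A * Pᵀ * D * (P * A * Pᵀ) = P * A * Pᵀ) (y : n → ℝ) :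
    ∃ k : m → ℝ, P *ᵥ A *ᵥ (y - Pᵀ *ᵥ k) = 0 ∧
      y ⬝ᵥ A *ᵥ y - (P *ᵥ A *ᵥ y) ⬝ᵥ D *ᵥ (P *ᵥ A *ᵥ y) =
        (y - Pᵀ *ᵥ k) ⬝ᵥ A *ᵥ (y - Pᵀ *ᵥ k) := by
  set k := D *ᵥ (P *ᵥ A *ᵥ y) with hk
  have horth : P *ᵥ A *ᵥ (y - Pᵀ *ᵥ k) = 0 := by
    rw [mulVec_sub, mulVec_sub, sub_eq_zero, mulVec_mulVec k, mulVec_mulVec k, ← Matrix.mul_assoc,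
      hk, mulVec_mulVec_of_mem_range hD (mulVec_mem_range_compression hA hD y)]
  refine ⟨k, horth, ?_⟩
  have hAs : A.IsSymm := isHermitian_iff_isSymm.mp hA.isHermitian
  rw [mulVec_sub, dotProduct_sub, dotProduct_mulVec_transpose_mulVec_eq_zero hAs horth, sub_zero,
    sub_dotProduct, dotProduct_comm (Pᵀ *ᵥ k), dotProduct_transpose_mulVec, dotProduct_comm k]

lemma isGreatest_sq_div_energy (hA : A.PosSemidef)
    (hD : P * A * Pᵀ * D * (P * A * Pᵀ) = P * A * Pᵀ) (y : n → ℝ)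
    (hne : ∃ u, P *ᵥ A *ᵥ u = 0 ∧ A *ᵥ u ≠ 0) :
    IsGreatest {t | ∃ u, P *ᵥ A *ᵥ u = 0 ∧ A *ᵥ u ≠ 0 ∧ t = (u ⬝ᵥ A *ᵥ y) ^ 2 / (u ⬝ᵥ A *ᵥ u)}
      (y ⬝ᵥ A *ᵥ y - (P *ᵥ A *ᵥ y) ⬝ᵥ D *ᵥ (P *ᵥ A *ᵥ y)) := by
  classical
  have hAs : A.IsSymm := isHermitian_iff_isSymm.mp hA.isHermitian
  have energy_eq_zero (u : n → ℝ) : u ⬝ᵥ A *ᵥ u = 0 ↔ A *ᵥ u = 0 :=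
    star_trivial u ▸ hA.dotProduct_mulVec_zero_iff u
  obtain ⟨k, horth, hdecrease⟩ := exists_orthogonal_sub_and_energy_sub_eq hA hD y
  have hproj {u : n → ℝ} (hu : P *ᵥ A *ᵥ u = 0) :
      u ⬝ᵥ A *ᵥ (y - Pᵀ *ᵥ k) = u ⬝ᵥ A *ᵥ y := by
    rw [mulVec_sub, dotProduct_sub, dotProduct_mulVec_transpose_mulVec_eq_zero hAs hu, sub_zero]
  have hmax := isGreatest_sq_apply_div (β := A.toBilin') (s := {u | P *ᵥ A *ᵥ u = 0})
    (fun u => by simpa [toBilin'_apply'] using hA.dotProduct_mulVec_nonneg u)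
    (isSymm_toBilin'_iff_isSymm.mpr hAs) horth
    (by simpa only [toBilin'_apply', ne_eq, energy_eq_zero, Set.mem_ofPred_eq] using hne)
  simp only [toBilin'_apply', ne_eq, energy_eq_zero] at hmax
  rw [hdecrease]
  obtain ⟨⟨u, hu, hAu, heq⟩, hupper⟩ := hmax
  refine ⟨⟨u, hu, hAu, by rw [heq, hproj hu]⟩, ?_⟩
  rintro _ ⟨u, hu, hAu, rfl⟩
  exact hupper ⟨u, hu, hAu, by rw [hproj hu]⟩

lemma isGreatest_sq_div_inverse_energy (hA : A.PosSemidef) (hC : A * C * A = A)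
    (hD : P * A * Pᵀ * D * (P * A * Pᵀ) = P * A * Pᵀ) {b : n → ℝ} (hb : b ∈ Set.range A.mulVec)
    (hne : ∃ x ∈ Set.range A.mulVec, P *ᵥ x = 0 ∧ x ≠ 0) :
    IsGreatest {t | ∃ x ∈ Set.range A.mulVec, P *ᵥ x = 0 ∧ x ≠ 0 ∧
        t = (x ⬝ᵥ C *ᵥ b) ^ 2 / (x ⬝ᵥ C *ᵥ x)}
      (b ⬝ᵥ C *ᵥ b - (P *ᵥ b) ⬝ᵥ D *ᵥ (P *ᵥ b)) := by
  obtain ⟨y, rfl⟩ := hb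
  simp only [Set.exists_range_iff, mulVec_dotProduct_mulVec_mulVec
    (isHermitian_iff_isSymm.mp hA.isHermitian) hC] at hne ⊢
  exact isGreatest_sq_div_energy hA hD y hne

end Compression

section Identification

/-- The 0–1 matrix `P` of a map `φ` between vertex sets: `P z y = 1` if and only if `z = φ y`.
Its action on vectors sums the entries over each fibre of `φ`. -/
def identificationMatrix {V V' : Type*} [DecidableEq V'] (R : Type*) [Zero R] [One R]
    (φ : V → V') : Matrix V' V R :=
  Matrix.of fun z y => if z = φ y then 1 else 0

variable {R V V' : Type*} [Semiring R] [Fintype V] [DecidableEq V']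

lemma identificationMatrix_mulVec_apply (φ : V → V') (x : V → R) (z : V') :
    (identificationMatrix R φ *ᵥ x) z = ∑ y with φ y = z, x y := by
  simp [identificationMatrix, mulVec, dotProduct, Finset.sum_filter, eq_comm]

lemma identificationMatrix_mulVec_eq_zero_iff {S : Finset V} {φ : V → V'}
    (hid : ∀ a ∈ S, ∀ b ∈ S, φ a = φ b)
    (hinj : ∀ a b : V, φ a = φ b → a = b ∨ (a ∈ S ∧ b ∈ S)) {x : V → R} :
    identificationMatrix R φ *ᵥ x = 0 ↔ (∀ a, a ∉ S → x a = 0) ∧ ∑ a, x a = 0 := by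
  simp only [funext_iff, identificationMatrix_mulVec_apply, Pi.zero_apply]
  constructor
  · refine fun h => ⟨fun a ha => ?_, ?_⟩
    · have hfibre : ∀ b ∈ Finset.univ.filter (φ · = φ a), b ≠ a → x b = 0 := fun b hb hba =>
        absurd ((hinj b a (Finset.mem_filter.mp hb).2).resolve_left hba).2 ha
      rw [← h (φ a), Finset.sum_eq_single a hfibre (by simp)]
    · rw [← Finset.sum_fiberwise_of_maps_to fun a => Finset.mem_image_of_mem φ (s := Finset.univ)]
      exact Finset.sum_eq_zero fun z _ => h z
  · rintro ⟨hsupp, hsum⟩ z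
    by_cases hz : ∃ s ∈ S, φ s = z
    · obtain ⟨s, hs, rfl⟩ := hz
      rw [← hsum]
      refine Finset.sum_subset (Finset.subset_univ _) fun a _ ha => hsupp a fun haS => ha ?_
      exact Finset.mem_filter.mpr ⟨Finset.mem_univ a, hid a haS s hs⟩
    · exact Finset.sum_eq_zero fun a ha =>
        hsupp a fun haS => hz ⟨a, haS, (Finset.mem_filter.mp ha).2⟩

end Identification

lemma exists_ne_zero_support_subset_sum_eq_zero {R V : Type*} [Ring R] [Nontrivial R] [Fintype V]
    {S : Finset V} (hS : S.Nontrivial) :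
    ∃ x : V → R, x ≠ 0 ∧ (∀ a, a ∉ S → x a = 0) ∧ ∑ a, x a = 0 := by
  classical
  obtain ⟨s, hs, t, ht, hst⟩ := hS
  refine ⟨Pi.single s 1 - Pi.single t 1, ?_, fun a ha => ?_, by simp⟩
  · exact fun h => by simpa [hst] using congrFun h s
  · simp [ne_of_mem_of_not_mem hs ha |>.symm, ne_of_mem_of_not_mem ht ha |>.symm]

lemma posSemidef_transpose_mul_diagonal_mul {m n : Type*} [Fintype m] [DecidableEq m] [Finite n]
    {w : m → ℝ} (hw : ∀ e, 0 ≤ w e) (B : Matrix m n ℝ) : (Bᵀ * diagonal w * B).PosSemidef := by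
  simpa only [conjTranspose_eq_transpose_of_trivial] using
    (PosSemidef.diagonal hw).conjTranspose_mul_mul_same B

theorem stmt_13_general {V V' : Type*} [Fintype V] [Fintype V'] [DecidableEq V']
    {L Lplus : Matrix V V ℝ} (hL : L.PosSemidef)
    (hker : ∀ x, L *ᵥ x = 0 ↔ ∃ c, x = fun _ => c) (hLplus : L * Lplus * L = L)
    {S : Finset V} (hS : S.Nontrivial) {φ : V → V'} (hid : ∀ a ∈ S, ∀ b ∈ S, φ a = φ b)
    (hinj : ∀ a b : V, φ a = φ b → a = b ∨ (a ∈ S ∧ b ∈ S))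
    {P : Matrix V' V ℝ} (hP : P = identificationMatrix ℝ φ) {LGSplus : Matrix V' V' ℝ}
    (hLGSplus : P * L * Pᵀ * LGSplus * (P * L * Pᵀ) = P * L * Pᵀ)
    {b : V → ℝ} (hb : ∑ a, b a = 0) :
    IsGreatest {t | ∃ x : V → ℝ, x ≠ 0 ∧ (∀ a, a ∉ S → x a = 0) ∧ (∑ a, x a) = 0 ∧
        t = (x ⬝ᵥ Lplus *ᵥ b) ^ 2 / (x ⬝ᵥ Lplus *ᵥ x)}
      (b ⬝ᵥ Lplus *ᵥ b - (P *ᵥ b) ⬝ᵥ LGSplus *ᵥ (P *ᵥ b)) := by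
  have mem_range {x : V → ℝ} : x ∈ Set.range L.mulVec ↔ ∑ a, x a = 0 :=
    mem_range_mulVec_iff_sum_eq_zero (isHermitian_iff_isSymm.mp hL.isHermitian) hLplus hker
  have mulVec_eq_zero {x : V → ℝ} : P *ᵥ x = 0 ↔ (∀ a, a ∉ S → x a = 0) ∧ ∑ a, x a = 0 :=
    hP ▸ identificationMatrix_mulVec_eq_zero_iff hid hinj
  obtain ⟨x, hx, hsupp, hsum⟩ := exists_ne_zero_support_subset_sum_eq_zero (R := ℝ) hS
  convert isGreatest_sq_div_inverse_energy hL hLplus hLGSplus (mem_range.mpr hb)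
    ⟨x, mem_range.mpr hsum, mulVec_eq_zero.mpr ⟨hsupp, hsum⟩, hx⟩ using 5 with t x
  simp only [mem_range, mulVec_eq_zero]
  tauto

theorem stmt_13
    {V : Type*} {E : Type*} {V' : Type*}
    [Fintype V] [DecidableEq V] [Fintype E] [DecidableEq E] [Fintype V'] [DecidableEq V']
    [Nonempty E]
    (w : E → ℝ) (hw : ∀ e, 0 < w e)
    (B : Matrix E V ℝ)
    (hB : ∀ e : E, ∃ u v : V, u ≠ v ∧
      B e = fun x => (if x = u then (1 : ℝ) else 0) - (if x = v then 1 else 0))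
    (L : Matrix V V ℝ) (hL : L = Bᵀ * Matrix.diagonal w * B)
    (hconn : ∀ x : V → ℝ, L.mulVec x = 0 ↔ ∃ c : ℝ, x = fun _ => c)
    (Lplus : Matrix V V ℝ) (hLplus : IsMoorePenrose L Lplus)
    (S : Finset V) (hS2 : 2 ≤ S.card)
    (φ : V → V') (hsurj : Function.Surjective φ)
    (hid : ∀ a ∈ S, ∀ b ∈ S, φ a = φ b)
    (hinj : ∀ a b : V, φ a = φ b → a = b ∨ (a ∈ S ∧ b ∈ S))
    (P : Matrix V' V ℝ)
    (hP : P = Matrix.of fun (z : V') (y : V) => if z = φ y then (1 : ℝ) else 0)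
    (LGS : Matrix V' V' ℝ) (hLGS : LGS = P * L * Pᵀ)
    (LGSplus : Matrix V' V' ℝ) (hLGSplus : IsMoorePenrose LGS LGSplus) :
    ∀ e : E,
      B e ⬝ᵥ Lplus.mulVec (B e) -
          P.mulVec (B e) ⬝ᵥ LGSplus.mulVec (P.mulVec (B e)) =
        sSup {t : ℝ | ∃ x : V → ℝ, x ≠ 0 ∧ (∀ a, a ∉ S → x a = 0) ∧ (∑ a, x a) = 0 ∧
          t = (x ⬝ᵥ Lplus.mulVec (B e)) ^ 2 / (x ⬝ᵥ Lplus.mulVec x)} := by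
  subst hL hLGS
  intro e
  obtain ⟨u, v, -, hBe⟩ := hB e
  exact (stmt_13_general (posSemidef_transpose_mul_diagonal_mul (fun e => (hw e).le) B) hconn
    hLplus.1 (Finset.one_lt_card_iff_nontrivial.mp hS2) hid hinj hP hLGSplus.1
    (by simp [hBe])).csSup_eq.symm
end

section
/- Let f ∈ E be an edge with leverage score lev(f) := (b_fᵀ L_G⁺ b_f)/r_f < 1, and let L' := L_G − (1/r_f)·b_f b_fᵀ (the Laplacian of G with f deleted), with Moore–Penrose pseudoinverse (L')⁺. Then for every edge e ∈ E with e ≠ f and every x ∈ ℝ^V with xᵀ1 = 0: |xᵀ (L')⁺ b_e| / √r_e ≤ |xᵀ L_G⁺ b_e| / √r_e + (1/(1 − lev(f))) · (|xᵀ L_G⁺ b_f| / √r_f) · (|b_fᵀ L_G⁺ b_e| / (√r_f·√r_e)). -/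
open Matrix BigOperators

/-!
Row `b` of the incidence matrix at `f` lies in the range of the Laplacian `L`. With
`c = 1 / r_f < 1 / (bᵀ L⁺ b)`, deleting `f` keeps the range, so the Sherman–Morrison formula
survives for pseudoinverses: `(L - c b bᵀ)⁺ = L⁺ + c / (1 - c bᵀ L⁺ b) • (L⁺ b) (L⁺ b)ᵀ`.
Pairing this identity with `x` and `b_e` and using the triangle inequality gives the bound.
-/

section RankOneDowndate

variable {R m n : Type*} [CommRing R] [Fintype m] [Fintype n]
  {A : Matrix m n R} {P : Matrix n m R} {u : m → R} {v : n → R} {c k : R}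

theorem sub_smul_vecMulVec_mul_add_smul_vecMulVec (hu : (A * P) *ᵥ u = u)
    (hk : k * (1 - c * (v ⬝ᵥ P *ᵥ u)) = c) :
    (A - c • vecMulVec u v) * (P + k • vecMulVec (P *ᵥ u) (v ᵥ* P)) = A * P := by
  have hA : A * vecMulVec (P *ᵥ u) (v ᵥ* P) = vecMulVec u (v ᵥ* P) := by
    rw [mul_vecMulVec, mulVec_mulVec, hu]
  have huv : vecMulVec u v * vecMulVec (P *ᵥ u) (v ᵥ* P) =
      (v ⬝ᵥ P *ᵥ u) • vecMulVec u (v ᵥ* P) := by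
    rw [vecMulVec_mul_vecMulVec, vecMulVec_smul]
  calc
    _ = A * P + (k * (1 - c * (v ⬝ᵥ P *ᵥ u)) - c) • vecMulVec u (v ᵥ* P) := by
      simp only [Matrix.sub_mul, Matrix.mul_add, Matrix.smul_mul, Matrix.mul_smul, hA, huv,
        vecMulVec_mul u v P]
      module
    _ = A * P := by rw [hk, sub_self, zero_smul, add_zero]

theorem add_smul_vecMulVec_mul_sub_smul_vecMulVec (hv : v ᵥ* (P * A) = v)
    (hk : k * (1 - c * (v ⬝ᵥ P *ᵥ u)) = c) :
    (P + k • vecMulVec (P *ᵥ u) (v ᵥ* P)) * (A - c • vecMulVec u v) = P * A := by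
  have hA : vecMulVec (P *ᵥ u) (v ᵥ* P) * A = vecMulVec (P *ᵥ u) v := by
    rw [vecMulVec_mul, vecMul_vecMul, hv]
  have huv : vecMulVec (P *ᵥ u) (v ᵥ* P) * vecMulVec u v =
      (v ⬝ᵥ P *ᵥ u) • vecMulVec (P *ᵥ u) v := by
    rw [vecMulVec_mul_vecMulVec, vecMulVec_smul, dotProduct_mulVec]
  calc
    _ = P * A + (k * (1 - c * (v ⬝ᵥ P *ᵥ u)) - c) • vecMulVec (P *ᵥ u) v := by
      simp only [Matrix.mul_sub, Matrix.add_mul, Matrix.smul_mul, Matrix.mul_smul, hA, huv,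
        mul_vecMulVec P u v]
      module
    _ = P * A := by rw [hk, sub_self, zero_smul, add_zero]

end RankOneDowndate

namespace IsMoorePenrose

variable {ι : Type*} [Fintype ι] [DecidableEq ι] {A P Q : Matrix ι ι ℝ}

theorem mul_pinv_unique (hP : IsMoorePenrose A P) (hQ : IsMoorePenrose A Q) : A * P = A * Q := by
  obtain ⟨hAPA, -, hAP, -⟩ := hP
  obtain ⟨hAQA, -, hAQ, -⟩ := hQ
  calc
    A * P = (A * P)ᵀ := hAP.symm
    _ = (A * Q * (A * P))ᵀ := by rw [← Matrix.mul_assoc, hAQA]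
    _ = A * P * (A * Q) := by rw [transpose_mul, hAP, hAQ]
    _ = A * Q := by rw [← Matrix.mul_assoc, hAPA]

theorem transpose (h : IsMoorePenrose A P) : IsMoorePenrose Aᵀ Pᵀ := by
  obtain ⟨hAPA, hPAP, hAP, hPA⟩ := h
  refine ⟨?_, ?_, ?_, ?_⟩
  · rw [Matrix.mul_assoc, ← transpose_mul, ← transpose_mul, hAPA]
  · rw [Matrix.mul_assoc, ← transpose_mul, ← transpose_mul, hPAP]
  · rw [← transpose_mul, hPA, hPA]
  · rw [← transpose_mul, hAP, hAP]

theorem pinv_mul_unique (hP : IsMoorePenrose A P) (hQ : IsMoorePenrose A Q) :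
    P * A = Q * A := by
  simpa only [← transpose_mul, transpose_inj] using hP.transpose.mul_pinv_unique hQ.transpose

theorem unique (hP : IsMoorePenrose A P) (hQ : IsMoorePenrose A Q) : P = Q :=
  calc
    P = P * A * P := hP.2.1.symm
    _ = Q * (A * P) := by rw [hP.pinv_mul_unique hQ, Matrix.mul_assoc]
    _ = Q * A * Q := by rw [hP.mul_pinv_unique hQ, Matrix.mul_assoc]
    _ = Q := hQ.2.1

section RankOne

variable {u v : ι → ℝ} {c : ℝ}

-- `hu` and `hv` say that `u` lies in the range of `A` and `v` in the range of `Aᵀ`.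
theorem sub_smul_vecMulVec (h : IsMoorePenrose A P) (hu : (A * P) *ᵥ u = u)
    (hv : v ᵥ* (P * A) = v) (hc : c * (v ⬝ᵥ P *ᵥ u) ≠ 1) :
    IsMoorePenrose (A - c • vecMulVec u v)
      (P + (c / (1 - c * (v ⬝ᵥ P *ᵥ u))) • vecMulVec (P *ᵥ u) (v ᵥ* P)) := by
  have hcoeff := div_mul_cancel₀ c (sub_ne_zero.mpr hc.symm)
  have hleft := sub_smul_vecMulVec_mul_add_smul_vecMulVec hu hcoeff
  have hright := add_smul_vecMulVec_mul_sub_smul_vecMulVec hv hcoeff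
  obtain ⟨hAPA, hPAP, hAP, hPA⟩ := h
  refine ⟨?_, ?_, by rw [hleft, hAP], by rw [hright, hPA]⟩
  · rw [hleft, Matrix.mul_sub, hAPA, Matrix.mul_smul, mul_vecMulVec, hu]
  · rw [hright, Matrix.mul_add, hPAP, Matrix.mul_smul, mul_vecMulVec, mulVec_mulVec, hPAP]

theorem dotProduct_mulVec_of_sub_smul_vecMulVec (h : IsMoorePenrose A P)
    (hQ : IsMoorePenrose (A - c • vecMulVec u v) Q) (hu : (A * P) *ᵥ u = u)
    (hv : v ᵥ* (P * A) = v) (hc : c * (v ⬝ᵥ P *ᵥ u) ≠ 1) (x y : ι → ℝ) :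
    x ⬝ᵥ Q *ᵥ y =
      x ⬝ᵥ P *ᵥ y + c / (1 - c * (v ⬝ᵥ P *ᵥ u)) * (x ⬝ᵥ P *ᵥ u) * (v ⬝ᵥ P *ᵥ y) := by
  rw [hQ.unique (h.sub_smul_vecMulVec hu hv hc), add_mulVec, smul_mulVec, vecMulVec_mulVec,
    ← dotProduct_mulVec, op_smul_eq_smul, dotProduct_add, dotProduct_smul, dotProduct_smul,
    smul_eq_mul, smul_eq_mul]
  ring

end RankOne

end IsMoorePenrose

section WeightedGram

variable {m n p : Type*} [Fintype m] [DecidableEq m] [Fintype n] {w : m → ℝ}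

theorem transpose_mul_diagonal_mul_self_mul_eq_zero (hw : ∀ i, 0 < w i) (B : Matrix m n ℝ)
    (X : Matrix n p ℝ) : Bᵀ * diagonal w * B * X = 0 ↔ B * X = 0 := by
  set S : Matrix m m ℝ := diagonal fun i => √(w i) with hS
  set T : Matrix m m ℝ := diagonal fun i => (√(w i))⁻¹ with hT
  have hSS : S * S = diagonal w := by
    simp only [hS, diagonal_mul_diagonal, Real.mul_self_sqrt (hw _).le]
  have hTS : T * S = 1 := by
    simp only [hT, hS, diagonal_mul_diagonal, inv_mul_cancel₀ (Real.sqrt_ne_zero'.mpr (hw _)),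
      diagonal_one]
  have hgram : Bᵀ * diagonal w * B = (S * B)ᴴ * (S * B) := by
    simp only [conjTranspose_eq_transpose_of_trivial, transpose_mul, hS, diagonal_transpose,
      ← hSS, Matrix.mul_assoc]
  rw [hgram, conjTranspose_mul_self_mul_eq_zero]
  refine ⟨fun h => ?_, fun h => by rw [Matrix.mul_assoc, h, Matrix.mul_zero]⟩
  calc
    B * X = T * (S * B * X) := by
      rw [Matrix.mul_assoc, ← Matrix.mul_assoc, hTS, Matrix.one_mul]
    _ = 0 := by rw [h, Matrix.mul_zero]

variable [DecidableEq n] {B : Matrix m n ℝ} {P : Matrix n n ℝ}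

theorem IsMoorePenrose.row_vecMul_pinv_mul_gram (hw : ∀ i, 0 < w i)
    (h : IsMoorePenrose (Bᵀ * diagonal w * B) P) (i : m) :
    B i ᵥ* (P * (Bᵀ * diagonal w * B)) = B i := by
  have hB : B * (P * (Bᵀ * diagonal w * B) - 1) = 0 := by
    rw [← transpose_mul_diagonal_mul_self_mul_eq_zero hw, Matrix.mul_sub, ← Matrix.mul_assoc,
      h.1, Matrix.mul_one, sub_self]
  rw [Matrix.mul_sub, Matrix.mul_one, sub_eq_zero] at hB
  rw [← mul_apply_eq_vecMul, hB]

theorem IsMoorePenrose.gram_mul_pinv_mulVec_row (hw : ∀ i, 0 < w i)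
    (h : IsMoorePenrose (Bᵀ * diagonal w * B) P) (i : m) :
    (Bᵀ * diagonal w * B * P) *ᵥ B i = B i := by
  have hsymm : (Bᵀ * diagonal w * B)ᵀ = Bᵀ * diagonal w * B := by
    simp only [transpose_mul, transpose_transpose, diagonal_transpose, Matrix.mul_assoc]
  have hrow := IsMoorePenrose.row_vecMul_pinv_mul_gram hw (hsymm ▸ h.transpose) i
  rwa [← vecMul_transpose, transpose_mul, hsymm]

end WeightedGram

theorem stmt_16_general
    {V E : Type*} [Fintype V] [DecidableEq V] [Fintype E] [DecidableEq E]
    (w : E → ℝ) (hw : ∀ e, 0 < w e) (B : Matrix E V ℝ)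
    (L : Matrix V V ℝ) (hL : L = Bᵀ * Matrix.diagonal w * B)
    (Lplus : Matrix V V ℝ) (hLplus : IsMoorePenrose L Lplus)
    (f : E) (rf : ℝ) (hrf : rf = 1 / w f)
    (lev : ℝ) (hlevdef : lev = (B f ⬝ᵥ Lplus.mulVec (B f)) / rf) (hlev : lev < 1)
    (L' : Matrix V V ℝ) (hL' : L' = L - (1 / rf) • Matrix.vecMulVec (B f) (B f))
    (L'plus : Matrix V V ℝ) (hL'plus : IsMoorePenrose L' L'plus)
    (e : E) (x : V → ℝ) :
    |x ⬝ᵥ L'plus.mulVec (B e)| / Real.sqrt (1 / w e) ≤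
      |x ⬝ᵥ Lplus.mulVec (B e)| / Real.sqrt (1 / w e) +
        (1 / (1 - lev)) * (|x ⬝ᵥ Lplus.mulVec (B f)| / Real.sqrt rf) *
          (|B f ⬝ᵥ Lplus.mulVec (B e)| / (Real.sqrt rf * Real.sqrt (1 / w e))) := by
  subst hL hL'
  have hrf_pos : 0 < rf := hrf ▸ one_div_pos.mpr (hw f)
  have hlev_eq : 1 / rf * (B f ⬝ᵥ Lplus *ᵥ B f) = lev := by rw [hlevdef, one_div_mul_eq_div]
  have hcoeff : 0 < 1 / rf / (1 - lev) := div_pos (one_div_pos.mpr hrf_pos) (sub_pos.mpr hlev)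
  have hupdate := hLplus.dotProduct_mulVec_of_sub_smul_vecMulVec hL'plus
    (hLplus.gram_mul_pinv_mulVec_row hw f) (hLplus.row_vecMul_pinv_mul_gram hw f)
    (hlev_eq.trans_ne hlev.ne) x (B e)
  rw [hlev_eq] at hupdate
  calc
    _ ≤ (|x ⬝ᵥ Lplus *ᵥ B e| +
          1 / rf / (1 - lev) * |x ⬝ᵥ Lplus *ᵥ B f| * |B f ⬝ᵥ Lplus *ᵥ B e|) / √(1 / w e) := by
      gcongr
      rw [hupdate]
      refine (abs_add_le _ _).trans_eq ?_
      rw [abs_mul, abs_mul, abs_of_pos hcoeff]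
    _ = _ := by
      nth_rewrite 1 [← Real.mul_self_sqrt hrf_pos.le]
      ring

theorem stmt_16
    {V : Type*} {E : Type*} [Fintype V] [DecidableEq V] [Fintype E] [DecidableEq E]
    [Nonempty E]
    (w : E → ℝ) (hw : ∀ e, 0 < w e)
    (B : Matrix E V ℝ)
    (hB : ∀ e : E, ∃ u v : V, u ≠ v ∧
      B e = fun x => (if x = u then (1 : ℝ) else 0) - (if x = v then 1 else 0))
    (L : Matrix V V ℝ) (hL : L = Bᵀ * Matrix.diagonal w * B)
    (hconn : ∀ x : V → ℝ, L.mulVec x = 0 ↔ ∃ c : ℝ, x = fun _ => c)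
    (Lplus : Matrix V V ℝ) (hLplus : IsMoorePenrose L Lplus)
    (f : E) (rf : ℝ) (hrf : rf = 1 / w f)
    (lev : ℝ) (hlevdef : lev = (B f ⬝ᵥ Lplus.mulVec (B f)) / rf) (hlev : lev < 1)
    (L' : Matrix V V ℝ) (hL' : L' = L - (1 / rf) • Matrix.vecMulVec (B f) (B f))
    (L'plus : Matrix V V ℝ) (hL'plus : IsMoorePenrose L' L'plus) :
    ∀ e : E, e ≠ f → ∀ x : V → ℝ, (∑ a, x a) = 0 →
      |x ⬝ᵥ L'plus.mulVec (B e)| / Real.sqrt (1 / w e) ≤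
        |x ⬝ᵥ Lplus.mulVec (B e)| / Real.sqrt (1 / w e) +
          (1 / (1 - lev)) * (|x ⬝ᵥ Lplus.mulVec (B f)| / Real.sqrt rf) *
            (|B f ⬝ᵥ Lplus.mulVec (B e)| / (Real.sqrt rf * Real.sqrt (1 / w e))) := by
  intro e _ x _
  exact stmt_16_general w hw B L hL Lplus hLplus f rf hrf lev hlevdef hlev L' hL' L'plus
    hL'plus e x
end
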